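/- For k ≥ 2, the set C_k^{>++} := { (a,b) ∈ ℝ⁺ × ℝ⁺ : Φ_k^>(a,b)(T₁) = T₂ } is nonempty if and only if lim_{a,b→+∞} Φ_k^>(a,b)(T₁) < T₂. -/

import Mathlib

open Set Filter Classical

noncomputable section

/-- `u c s` is the solution of `-(p·u')' + q·u = c·w·u` with `u c s s = 0` and
`(u c s)' s = 1/(p s)`; `u'` is its `t`-derivative. -/
def IsSolFamily (p q w : ℝ → ℝ) (u u' : ℝ → ℝ → ℝ → ℝ) : Prop :=
  ∀ c s : ℝ, u c s s = 0 ∧ u' c s s = 1 / p s ∧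
    ∀ t : ℝ, HasDerivAt (u c s) (u' c s t) t ∧
      HasDerivAt (fun τ => p τ * u' c s τ) (q t * u c s t - c * w t * u c s t) t

/-- Zero set of `u c s` strictly after `s`. -/
def zeroSet (u : ℝ → ℝ → ℝ → ℝ) (c s : ℝ) : Set ℝ := {t | s < t ∧ u c s t = 0}

/-- The zero-function `φ_c(s)`, valued in `EReal` (equal to `⊤` when `u c s`
never vanishes after `s`). -/
noncomputable def phiE (u : ℝ → ℝ → ℝ → ℝ) (c s : ℝ) : EReal :=
  if (zeroSet u c s).Nonempty then ((sInf (zeroSet u c s) : ℝ) : EReal) else ⊤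

/-- The zero-function as a map `EReal → EReal` (`⊤` propagates). -/
noncomputable def phiStep (u : ℝ → ℝ → ℝ → ℝ) (c : ℝ) (x : EReal) : EReal :=
  if x = ⊤ ∨ x = ⊥ then ⊤ else phiE u c x.toReal

/-- `Φ_k^>(a,b)`: composition of `k` alternating zero-functions `φ_a^m, φ_b^n`,
starting with `φ_a^m`. -/
noncomputable def PhiGt (uM uN : ℝ → ℝ → ℝ → ℝ) (a b : ℝ) : ℕ → EReal → EReal
  | 0 => id
  | k + 1 => (if k % 2 = 0 then phiStep uM a else phiStep uN b) ∘ PhiGt uM uN a b k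

/-- `Φ_k^<(a,b)`: composition of `k` alternating zero-functions, starting with
`φ_b^n`. -/
noncomputable def PhiLt (uM uN : ℝ → ℝ → ℝ → ℝ) (a b : ℝ) : ℕ → EReal → EReal
  | 0 => id
  | k + 1 => (if k % 2 = 0 then phiStep uN b else phiStep uM a) ∘ PhiLt uM uN a b k

/-- `C_k^{>++} = {(a,b) ∈ ℝ⁺×ℝ⁺ : Φ_k^>(a,b)(T₁) = T₂}`. -/
def CGt (uM uN : ℝ → ℝ → ℝ → ℝ) (T₁ T₂ : ℝ) (k : ℕ) : Set (ℝ × ℝ) :=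
  {ab | 0 < ab.1 ∧ 0 < ab.2 ∧ PhiGt uM uN ab.1 ab.2 k (T₁ : EReal) = (T₂ : EReal)}

/-- `C_k^{<++} = {(a,b) ∈ ℝ⁺×ℝ⁺ : Φ_k^<(a,b)(T₁) = T₂}`. -/
def CLt (uM uN : ℝ → ℝ → ℝ → ℝ) (T₁ T₂ : ℝ) (k : ℕ) : Set (ℝ × ℝ) :=
  {ab | 0 < ab.1 ∧ 0 < ab.2 ∧ PhiLt uM uN ab.1 ab.2 k (T₁ : EReal) = (T₂ : EReal)}

/-!
For a single weight, Sturm theory shows that the zero function `φ_c(s)` is continuous in `(c, s)`,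
monotone in `s`, strictly decreasing in `c > 0`, and identically `⊤` at `c = 0`. For the
dependence on `c`, divide the equation by `c`: it becomes `-((p/c) u')' + (q/c) u = w u`, whose
coefficients `p/c` and `q/c` decrease in `c`, so that the Sturm–Picone comparison theorem applies
even though `w` may change sign.

These properties pass to the compositions `Φ_k^>`. If `Φ_k^>(a, b)(T₁) = T₂`, then strict
monotonicity puts the limit strictly below `T₂`. Conversely, if the limit is below `T₂`, then
`Φ_k^>(a, b)(T₁) < T₂` for some positive `(a, b)`, and `t ↦ Φ_k^>(t a, t b)(T₁)` runs continuously
from `⊤` to a value below `T₂` on `[0, 1]`.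
-/

open scoped Topology

lemma eq_of_monotoneOn_Ioo_of_tendsto {F : ℝ → ℝ} {a b x l : ℝ} (hF : MonotoneOn F (Ioo a b))
    (ha : Tendsto F (𝓝[>] a) (𝓝 l)) (hb : Tendsto F (𝓝[<] b) (𝓝 l)) (hx : x ∈ Ioo a b) :
    F x = l := by
  refine le_antisymm (ge_of_tendsto hb ?_) (le_of_tendsto ha ?_)
  · filter_upwards [Ioo_mem_nhdsLT hx.2] with t ht
    exact hF hx ⟨hx.1.trans ht.1, ht.2⟩ ht.1.le
  · filter_upwards [Ioo_mem_nhdsGT hx.1] with t ht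
    exact hF ⟨ht.1, ht.2.trans hx.2⟩ hx ht.2.le

lemma tendsto_sq_div_nhdsNE {f h : ℝ → ℝ} {f' h' x : ℝ} (hf : HasDerivAt f f' x)
    (hh : HasDerivAt h h' x) (hfx : f x = 0) (hne : h x ≠ 0 ∨ h' ≠ 0) :
    Tendsto (fun t => f t ^ 2 / h t) (𝓝[≠] x) (𝓝 0) := by
  have hf0 : Tendsto f (𝓝[≠] x) (𝓝 0) :=
    hfx ▸ hf.continuousAt.tendsto.mono_left nhdsWithin_le_nhds
  by_cases hhx : h x = 0
  · have hquot : Tendsto (fun t => slope f x t / slope h x t) (𝓝[≠] x) (𝓝 (f' / h')) :=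
      hf.tendsto_slope.div hh.tendsto_slope (hne.resolve_left (not_not.2 hhx))
    have hprod := hf0.mul hquot
    rw [zero_mul] at hprod
    refine hprod.congr' ?_
    filter_upwards [self_mem_nhdsWithin] with t ht
    have htx : t - x ≠ 0 := sub_ne_zero.2 ht
    simp only [slope_def_field, hfx, hhx, sub_zero]
    field_simp
  · have hhlim : Tendsto h (𝓝[≠] x) (𝓝 (h x)) :=
      hh.continuousAt.tendsto.mono_left nhdsWithin_le_nhds
    have hquot := (hf0.pow 2).div hhlim hhx
    rwa [zero_pow two_ne_zero, zero_div] at hquot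

/-! ### Sturm–Picone comparison -/

/-- `f` is a classical solution of `(p f')' = g f` on the real line. The derivative `f'` is a
separate argument and only `p f'` is required to be differentiable. -/
structure IsSturmSolution (p g f f' : ℝ → ℝ) : Prop where
  hasDerivAt : ∀ t, HasDerivAt f (f' t) t
  hasDerivAt_flux : ∀ t, HasDerivAt (fun τ => p τ * f' τ) (g t * f t) t

/-- Picone's function `(f / h) (p₁ f' h - p₂ f h')`, written so that only one division occurs. -/
def picone (p₁ p₂ f f' h h' : ℝ → ℝ) (t : ℝ) : ℝ :=
  f t * (p₁ t * f' t) - f t ^ 2 / h t * (p₂ t * h' t)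

namespace IsSturmSolution

variable {p p₁ p₂ g g₁ g₂ f f' h h' : ℝ → ℝ}

lemma continuous (hf : IsSturmSolution p g f f') : Continuous f :=
  continuous_iff_continuousAt.2 fun t => (hf.hasDerivAt t).continuousAt

lemma const_mul (hf : IsSturmSolution p g f f') (a : ℝ) :
    IsSturmSolution (fun t => a * p t) (fun t => a * g t) f f' where
  hasDerivAt := hf.hasDerivAt
  hasDerivAt_flux t := by simpa only [mul_assoc] using (hf.hasDerivAt_flux t).const_mul a

lemma wronskian_eq (hf : IsSturmSolution p g f f') (hh : IsSturmSolution p g h h') (x y : ℝ) :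
    p x * f' x * h x - f x * (p x * h' x) = p y * f' y * h y - f y * (p y * h' y) := by
  have hderiv (t : ℝ) :
      HasDerivAt (fun t => p t * f' t * h t - f t * (p t * h' t)) 0 t := by
    refine (((hf.hasDerivAt_flux t).mul (hh.hasDerivAt t)).sub
      ((hf.hasDerivAt t).mul (hh.hasDerivAt_flux t))).congr_deriv ?_
    ring
  exact is_const_of_deriv_eq_zero (fun t => (hderiv t).differentiableAt)
    (fun t => (hderiv t).deriv) x y

lemma hasDerivAt_picone (hf : IsSturmSolution p₁ g₁ f f') (hh : IsSturmSolution p₂ g₂ h h')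
    {t : ℝ} (ht : h t ≠ 0) :
    HasDerivAt (picone p₁ p₂ f f' h h')
      ((g₁ t - g₂ t) * f t ^ 2 + (p₁ t - p₂ t) * f' t ^ 2
        + p₂ t * (f' t - f t * h' t / h t) ^ 2) t := by
  refine (((hf.hasDerivAt t).mul (hf.hasDerivAt_flux t)).sub
    ((((hf.hasDerivAt t).pow 2).div (hh.hasDerivAt t) ht).mul
      (hh.hasDerivAt_flux t))).congr_deriv ?_
  simp only [Pi.div_apply, Pi.pow_apply]
  field_simp
  ring

lemma tendsto_picone (hf : IsSturmSolution p₁ g₁ f f') (hh : IsSturmSolution p₂ g₂ h h')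
    {x : ℝ} (hfx : f x = 0) (hne : h x ≠ 0 ∨ h' x ≠ 0) :
    Tendsto (picone p₁ p₂ f f' h h') (𝓝[≠] x) (𝓝 0) := by
  have hfirst : Tendsto (fun t => f t * (p₁ t * f' t)) (𝓝[≠] x) (𝓝 0) := by
    have := (hf.continuous.tendsto x).mul (hf.hasDerivAt_flux x).continuousAt.tendsto
    rw [hfx, zero_mul] at this
    exact this.mono_left nhdsWithin_le_nhds
  have hsecond : Tendsto (fun t => f t ^ 2 / h t * (p₂ t * h' t)) (𝓝[≠] x) (𝓝 0) := by
    simpa only [zero_mul] using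
      (tendsto_sq_div_nhdsNE (hf.hasDerivAt x) (hh.hasDerivAt x) hfx hne).mul
        ((hh.hasDerivAt_flux x).continuousAt.tendsto.mono_left nhdsWithin_le_nhds)
  have hsub := hfirst.sub hsecond
  rwa [sub_zero] at hsub

theorem exists_zero_of_sturm_picone (hf : IsSturmSolution p₁ g₁ f f')
    (hh : IsSturmSolution p₂ g₂ h h') {a b : ℝ} (hg : ∀ t ∈ Ioo a b, g₂ t ≤ g₁ t)
    (hp₂ : ∀ t ∈ Ioo a b, 0 ≤ p₂ t) (hp : ∀ t ∈ Ioo a b, p₂ t < p₁ t)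
    (hfa : f a = 0) (hfb : f b = 0) (hfne : ∃ x ∈ Ioo a b, f x ≠ 0)
    (hha : h a ≠ 0 ∨ h' a ≠ 0) (hhb : h b ≠ 0 ∨ h' b ≠ 0) :
    ∃ t ∈ Ioo a b, h t = 0 := by
  by_contra! hne
  set F := picone p₁ p₂ f f' h h'
  have hderiv (t) (ht : t ∈ Ioo a b) := hf.hasDerivAt_picone hh (hne t ht)
  have hF_mono : MonotoneOn F (Ioo a b) := by
    refine monotoneOn_of_deriv_nonneg (convex_Ioo a b)
      (fun t ht => (hderiv t ht).continuousAt.continuousWithinAt) ?_ ?_ <;>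
      rw [interior_Ioo] <;> intro t ht
    · exact (hderiv t ht).differentiableAt.differentiableWithinAt
    · rw [(hderiv t ht).deriv]
      have := sub_nonneg.2 (hg t ht)
      have := sub_pos.2 (hp t ht)
      have := hp₂ t ht
      positivity
  have hF_zero (t) (ht : t ∈ Ioo a b) : F t = 0 :=
    eq_of_monotoneOn_Ioo_of_tendsto hF_mono
      ((hf.tendsto_picone hh hfa hha).mono_left (nhdsGT_le_nhdsNE a))
      ((hf.tendsto_picone hh hfb hhb).mono_left (nhdsLT_le_nhdsNE b)) ht
  obtain ⟨x, hx, hfx⟩ := hfne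
  obtain ⟨y, hy, hslope⟩ := exists_hasDerivAt_eq_slope f f' hx.1 hf.continuous.continuousOn
    fun t _ => hf.hasDerivAt t
  have hy_mem : y ∈ Ioo a b := ⟨hy.1, hy.2.trans hx.2⟩
  have hf'y : f' y ≠ 0 := by
    rw [hslope, hfa, sub_zero]
    exact div_ne_zero hfx (sub_pos.2 hx.1).ne'
  have hF_deriv_zero : HasDerivAt F 0 y :=
    (hasDerivAt_const y 0).congr_of_eventuallyEq
      (eventually_of_mem (Ioo_mem_nhds hy_mem.1 hy_mem.2) hF_zero)
  have := sub_nonneg.2 (hg y hy_mem)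
  have := sub_pos.2 (hp y hy_mem)
  have := hp₂ y hy_mem
  exact ne_of_gt (by positivity) ((hderiv y hy_mem).unique hF_deriv_zero)

end IsSturmSolution

/-! ### The first zero -/

section FirstZero

variable {u : ℝ → ℝ → ℝ → ℝ} {c s t : ℝ}

lemma phiE_le (ht : t ∈ zeroSet u c s) : phiE u c s ≤ t := by
  rw [phiE, if_pos ⟨t, ht⟩, EReal.coe_le_coe_iff]
  exact csInf_le ⟨s, fun _ hτ => hτ.1.le⟩ ht

lemma le_phiE (ht : ∀ τ ∈ zeroSet u c s, t ≤ τ) : t ≤ phiE u c s := by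
  unfold phiE
  split_ifs with hne
  · exact EReal.coe_le_coe_iff.2 (le_csInf hne ht)
  · exact le_top

lemma phiE_ne_bot : phiE u c s ≠ ⊥ :=
  ((EReal.bot_lt_coe s).trans_le (le_phiE fun _ hτ => hτ.1.le)).ne'

end FirstZero

namespace IsSolFamily

variable {p q w : ℝ → ℝ} {u u' : ℝ → ℝ → ℝ → ℝ} {c c' s s' t : ℝ}

lemma isSturmSolution (hu : IsSolFamily p q w u u') (c s : ℝ) :
    IsSturmSolution p (fun t => q t - c * w t) (u c s) (u' c s) where
  hasDerivAt t := ((hu c s).2.2 t).1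
  hasDerivAt_flux t := by simpa only [sub_mul] using ((hu c s).2.2 t).2

lemma apply_self (hu : IsSolFamily p q w u u') (c s : ℝ) : u c s s = 0 := (hu c s).1

lemma flux_self (hu : IsSolFamily p q w u u') (hp : p s ≠ 0) (c : ℝ) : p s * u' c s s = 1 := by
  rw [(hu c s).2.1, mul_one_div_cancel hp]

lemma deriv_self_ne_zero (hu : IsSolFamily p q w u u') (hp : p s ≠ 0) (c : ℝ) : u' c s s ≠ 0 :=
  right_ne_zero_of_mul_eq_one (hu.flux_self hp c)

lemma eq_zero_of_isSturmSolution (hu : IsSolFamily p q w u u') (hp : ∀ t, p t ≠ 0)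
    {f f' : ℝ → ℝ} (hf : IsSturmSolution p (fun t => q t - c * w t) f f') (hft : f t = 0)
    (hf't : f' t = 0) : f = 0 := by
  ext r
  -- The Wronskian of `f` and `u c r` vanishes at `t` and equals `-f r` at `r`.
  have hW := hf.wronskian_eq (hu.isSturmSolution c r) r t
  rw [hft, hf't, hu.apply_self, hu.flux_self (hp r)] at hW
  simpa using hW

lemma deriv_ne_zero_of_apply_eq_zero (hu : IsSolFamily p q w u u') (hp : ∀ t, p t ≠ 0)
    (ht : u c s t = 0) : u' c s t ≠ 0 := by
  intro ht'
  have hzero : u c s = 0 := hu.eq_zero_of_isSturmSolution hp (hu.isSturmSolution c s) ht ht'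
  have hderiv : HasDerivAt (u c s) 0 s := hzero ▸ hasDerivAt_const s (0 : ℝ)
  exact hu.deriv_self_ne_zero (hp s) c
    (((hu.isSturmSolution c s).hasDerivAt s).unique hderiv)

lemma eventually_pos_nhdsGT (hu : IsSolFamily p q w u u') (hp : 0 < p s) (c : ℝ) :
    ∀ᶠ t in 𝓝[>] s, 0 < u c s t := by
  have hslope := ((hu.isSturmSolution c s).hasDerivAt s).tendsto_slope.mono_left
    (nhdsGT_le_nhdsNE s)
  have hpos : 0 < u' c s s := by rw [(hu c s).2.1]; positivity
  filter_upwards [hslope.eventually (lt_mem_nhds hpos), self_mem_nhdsWithin] with t ht hst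
  exact pos_of_slope_pos hst ht (hu.apply_self c s)

lemma isClosed_zeroSet (hu : IsSolFamily p q w u u') (hp : 0 < p s) (c : ℝ) :
    IsClosed (zeroSet u c s) := by
  obtain ⟨r, hsr, hpos⟩ := mem_nhdsGT_iff_exists_Ioo_subset.1 (hu.eventually_pos_nhdsGT hp c)
  have hzero : zeroSet u c s = Ici r ∩ {t | u c s t = 0} :=
    Subset.antisymm (fun t ht => ⟨not_lt.1 fun htr => (hpos ⟨ht.1, htr⟩).ne' ht.2, ht.2⟩)
      fun t ht => ⟨hsr.trans_le ht.1, ht.2⟩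
  rw [hzero]
  exact isClosed_Ici.inter
    (isClosed_eq (hu.isSturmSolution c s).continuous continuous_const)

lemma isLeast_zeroSet (hu : IsSolFamily p q w u u') (hp : 0 < p s) (h : phiE u c s = t) :
    IsLeast (zeroSet u c s) t := by
  have hne : (zeroSet u c s).Nonempty := by
    by_contra hempty
    rw [phiE, if_neg hempty] at h
    exact EReal.coe_ne_top t h.symm
  rw [phiE, if_pos hne, EReal.coe_eq_coe_iff] at h
  exact h ▸ (hu.isClosed_zeroSet hp c).isLeast_csInf hne ⟨s, fun _ hτ => hτ.1.le⟩

lemma pos_of_lt_phiE (hu : IsSolFamily p q w u u') (hp : 0 < p s) (hst : s < t)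
    (ht : t < phiE u c s) : 0 < u c s t := by
  by_contra! hle
  obtain ⟨x, hx, hsx, hxt⟩ :=
    ((hu.eventually_pos_nhdsGT hp c).and (Ioo_mem_nhdsGT hst)).exists
  obtain ⟨y, hy, huy⟩ := intermediate_value_Icc' hxt.le
    (hu.isSturmSolution c s).continuous.continuousOn ⟨hle, hx.le⟩
  exact ht.not_ge ((phiE_le ⟨hsx.trans_le hy.1, huy⟩).trans (EReal.coe_le_coe_iff.2 hy.2))

lemma deriv_neg_of_phiE_eq (hu : IsSolFamily p q w u u') (hp : ∀ t, 0 < p t)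
    (h : phiE u c s = t) : u' c s t < 0 := by
  obtain ⟨⟨hst, hut⟩, -⟩ := hu.isLeast_zeroSet (hp s) h
  refine lt_of_le_of_ne ?_ (hu.deriv_ne_zero_of_apply_eq_zero (fun t => (hp t).ne') hut)
  refine le_of_tendsto (((hu.isSturmSolution c s).hasDerivAt t).tendsto_slope.mono_left
    (nhdsLT_le_nhdsNE t)) ?_
  filter_upwards [Ioo_mem_nhdsLT hst] with τ hτ
  have hpos : 0 < u c s τ :=
    hu.pos_of_lt_phiE (hp s) hτ.1 (h ▸ EReal.coe_lt_coe_iff.2 hτ.2)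
  rw [slope_def_field, hut, sub_zero]
  exact div_nonpos_of_nonneg_of_nonpos hpos.le (sub_nonpos.2 hτ.2.le)

lemma monotone_phiE (hu : IsSolFamily p q w u u') (hp : ∀ t, 0 < p t) (c : ℝ) :
    Monotone (phiE u c) := by
  refine monotone_iff_forall_lt.2 fun s s' hss' => ?_
  by_contra! hlt
  lift phiE u c s' to ℝ using ⟨hlt.ne_top, phiE_ne_bot⟩ with t ht
  have hst : s' < t := (hu.isLeast_zeroSet (hp s') ht.symm).1.1
  have hpos_s' : 0 < u c s s' :=
    hu.pos_of_lt_phiE (hp s) hss' ((EReal.coe_lt_coe_iff.2 hst).trans hlt)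
  have hpos_t : 0 < u c s t := hu.pos_of_lt_phiE (hp s) (hss'.trans hst) hlt
  have hflux_t : p t * u' c s' t < 0 :=
    mul_neg_of_pos_of_neg (hp t) (hu.deriv_neg_of_phiE_eq hp ht.symm)
  -- The Wronskian of `u c s'` and `u c s` is positive at `s'` and negative at `t`.
  have hW := (hu.isSturmSolution c s').wronskian_eq (hu.isSturmSolution c s) s' t
  rw [(hu.isLeast_zeroSet (hp s') ht.symm).1.2, hu.apply_self,
    hu.flux_self (hp s').ne'] at hW
  linarith [mul_neg_of_neg_of_pos hflux_t hpos_t]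

lemma phiE_zero (hu : IsSolFamily p q w u u') (hp : ∀ t, 0 < p t) (hq : ∀ t, 0 ≤ q t) (s : ℝ) :
    phiE u 0 s = ⊤ := by
  by_contra hfin
  lift phiE u 0 s to ℝ using ⟨hfin, phiE_ne_bot⟩ with t ht
  have hst : s < t := (hu.isLeast_zeroSet (hp s) ht.symm).1.1
  have hflux_mono : MonotoneOn (fun τ => p τ * u' 0 s τ) (Icc s t) := by
    have hflux (τ : ℝ) := (hu.isSturmSolution 0 s).hasDerivAt_flux τ
    refine monotoneOn_of_hasDerivWithinAt_nonneg (convex_Icc s t)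
      (fun τ _ => (hflux τ).continuousAt.continuousWithinAt)
      (fun τ _ => (hflux τ).hasDerivWithinAt) fun τ hτ => ?_
    rw [interior_Icc] at hτ
    have hpos : 0 < u 0 s τ :=
      hu.pos_of_lt_phiE (hp s) hτ.1 (ht ▸ EReal.coe_lt_coe_iff.2 hτ.2)
    simpa using mul_nonneg (hq τ) hpos.le
  have hle : p s * u' 0 s s ≤ p t * u' 0 s t :=
    hflux_mono (left_mem_Icc.2 hst.le) (right_mem_Icc.2 hst.le) hst.le
  rw [hu.flux_self (hp s).ne'] at hle
  linarith [mul_neg_of_pos_of_neg (hp t) (hu.deriv_neg_of_phiE_eq hp ht.symm)]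

lemma phiE_lt_phiE (hu : IsSolFamily p q w u u') (hp : ∀ t, 0 < p t) (hq : ∀ t, 0 ≤ q t)
    (hc : 0 < c) (hcc' : c < c') (hfin : phiE u c s ≠ ⊤) : phiE u c' s < phiE u c s := by
  lift phiE u c s to ℝ using ⟨hfin, phiE_ne_bot⟩ with t ht
  obtain ⟨⟨hst, hut⟩, -⟩ := hu.isLeast_zeroSet (hp s) ht.symm
  have hinv : c'⁻¹ < c⁻¹ := inv_strictAnti₀ hc hcc'
  have hc' : 0 < c' := hc.trans hcc'
  have hsimple (τ : ℝ) : u c' s τ ≠ 0 ∨ u' c' s τ ≠ 0 :=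
    or_iff_not_imp_left.2 fun hτ =>
      hu.deriv_ne_zero_of_apply_eq_zero (fun t => (hp t).ne') (not_not.1 hτ)
  obtain ⟨x, hx⟩ := nonempty_Ioo.2 hst
  obtain ⟨τ, hτ, huτ⟩ :=
    ((hu.isSturmSolution c s).const_mul c⁻¹).exists_zero_of_sturm_picone
      ((hu.isSturmSolution c' s).const_mul c'⁻¹)
      (fun r _ => by
        have := mul_le_mul_of_nonneg_right hinv.le (hq r)
        field_simp at this ⊢
        linarith)
      (fun r _ => (mul_pos (inv_pos.2 hc') (hp r)).le)
      (fun r _ => mul_lt_mul_of_pos_right hinv (hp r))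
      (hu.apply_self c s) hut
      ⟨x, hx, (hu.pos_of_lt_phiE (hp s) hx.1 (ht ▸ EReal.coe_lt_coe_iff.2 hx.2)).ne'⟩
      (hsimple s) (hsimple t)
  exact (phiE_le ⟨hτ.1, huτ⟩).trans_lt (EReal.coe_lt_coe_iff.2 hτ.2)

lemma eventually_deriv_pos_nhds_diag (hu : IsSolFamily p q w u u') (hp : ∀ t, 0 < p t)
    (hq : Continuous q) (hw : Continuous w)
    (hcont : Continuous fun z : ℝ × ℝ × ℝ => u z.1 z.2.1 z.2.2) (c s : ℝ) :
    ∀ᶠ z : ℝ × ℝ × ℝ in 𝓝 (c, s, s), 0 < u' z.1 z.2.1 z.2.2 := by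
  have hflux_deriv_small : ∀ᶠ z : ℝ × ℝ × ℝ in 𝓝 (c, s, s),
      ‖(q z.2.2 - z.1 * w z.2.2) * u z.1 z.2.1 z.2.2‖ < 1 := by
    have hcont' : Continuous fun z : ℝ × ℝ × ℝ =>
        ‖(q z.2.2 - z.1 * w z.2.2) * u z.1 z.2.1 z.2.2‖ := by fun_prop
    exact hcont'.continuousAt.eventually_lt_const (by simp [hu.apply_self])
  obtain ⟨ε, hε, hball⟩ := Metric.eventually_nhds_iff_ball.1 hflux_deriv_small
  filter_upwards [Metric.ball_mem_nhds (c, s, s) (lt_min hε one_half_pos)]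
  rintro ⟨c', s', t⟩ hz
  simp only [← ball_prod_same, mem_prod] at hz hball
  obtain ⟨hc', hs', ht⟩ := hz
  have hflux := (convex_ball s (min ε (1 / 2))).norm_image_sub_le_of_norm_hasDerivWithin_le
    (fun τ _ => ((hu.isSturmSolution c' s').hasDerivAt_flux τ).hasDerivWithinAt)
    (fun τ hτ => (hball (c', s', τ)
      ⟨Metric.ball_subset_ball (min_le_left _ _) hc',
        Metric.ball_subset_ball (min_le_left _ _) hs',
        Metric.ball_subset_ball (min_le_left _ _) hτ⟩).le) hs' ht
  have hdist : ‖t - s'‖ < 1 := by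
    have hs'_half : dist s' s < 1 / 2 := Metric.ball_subset_ball (min_le_right ε _) hs'
    have ht_half : dist t s < 1 / 2 := Metric.ball_subset_ball (min_le_right ε _) ht
    rw [← dist_eq_norm]
    linarith [dist_triangle_right t s' s]
  rw [hu.flux_self (hp s').ne', one_mul] at hflux
  have hpos : 0 < p t * u' c' s' t := by linarith [(abs_le.1 hflux).1]
  exact (pos_iff_pos_of_mul_pos hpos).1 (hp t)

lemma eventually_pos_nhds_diag (hu : IsSolFamily p q w u u') (hp : ∀ t, 0 < p t)
    (hq : Continuous q) (hw : Continuous w)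
    (hcont : Continuous fun z : ℝ × ℝ × ℝ => u z.1 z.2.1 z.2.2) (c s : ℝ) :
    ∀ᶠ z : ℝ × ℝ × ℝ in 𝓝 (c, s, s), z.2.1 < z.2.2 → 0 < u z.1 z.2.1 z.2.2 := by
  obtain ⟨ε, hε, hball⟩ :=
    Metric.eventually_nhds_iff_ball.1 (hu.eventually_deriv_pos_nhds_diag hp hq hw hcont c s)
  filter_upwards [Metric.ball_mem_nhds (c, s, s) hε]
  rintro ⟨c', s', t⟩ hz hst
  simp only [← ball_prod_same, mem_prod] at hz hball
  obtain ⟨hc', hs', ht⟩ := hz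
  have hsol := hu.isSturmSolution c' s'
  obtain ⟨y, hy, hslope⟩ := exists_hasDerivAt_eq_slope (u c' s') (u' c' s') hst
    hsol.continuous.continuousOn fun τ _ => hsol.hasDerivAt τ
  have hpos : 0 < u' c' s' y :=
    hball (c', s', y) ⟨hc', hs', (convex_ball s ε).ordConnected.out hs' ht (Ioo_subset_Icc_self hy)⟩
  rw [hslope, hu.apply_self, sub_zero] at hpos
  exact (div_pos_iff_of_pos_right (sub_pos.2 hst)).1 hpos

lemma lowerSemicontinuous_phiE (hu : IsSolFamily p q w u u') (hp : ∀ t, 0 < p t)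
    (hq : Continuous q) (hw : Continuous w)
    (hcont : Continuous fun z : ℝ × ℝ × ℝ => u z.1 z.2.1 z.2.2) :
    LowerSemicontinuous fun z : ℝ × ℝ => phiE u z.1 z.2 := by
  rintro ⟨c, s⟩ y hy
  obtain ⟨r, hyr, hr⟩ := EReal.lt_iff_exists_real_btwn.1 hy
  have hpos : ∀ᶠ z : ℝ × ℝ in 𝓝 (c, s), ∀ t ∈ Icc (s - 1) r, z.2 < t → 0 < u z.1 z.2 t := by
    refine isCompact_Icc.eventually_forall_of_forall_eventually fun t ht => ?_
    have hassoc : Continuous fun z : (ℝ × ℝ) × ℝ => (z.1.1, z.1.2, z.2) := by fun_prop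
    rcases lt_trichotomy t s with hts | rfl | hst
    · have : ∀ᶠ z : (ℝ × ℝ) × ℝ in 𝓝 ((c, s), t), z.2 < z.1.2 :=
        ContinuousAt.eventually_lt (by fun_prop) (by fun_prop) hts
      filter_upwards [this] with z hz hz'
      exact absurd hz hz'.not_gt
    · exact (hassoc.tendsto ((c, t), t)).eventually
        (hu.eventually_pos_nhds_diag hp hq hw hcont c t)
    · have hut : 0 < u c s t :=
        hu.pos_of_lt_phiE (hp s) hst ((EReal.coe_le_coe_iff.2 ht.2).trans_lt hr)
      filter_upwards [(hcont.comp hassoc).continuousAt.eventually (lt_mem_nhds hut)] with z hz _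
      exact hz
  have hs : ∀ᶠ z : ℝ × ℝ in 𝓝 (c, s), s - 1 < z.2 :=
    continuous_snd.continuousAt.eventually (lt_mem_nhds (sub_one_lt s))
  filter_upwards [hpos, hs] with z hz hsz
  refine hyr.trans_le (le_phiE fun t ht => ?_)
  by_contra! htr
  exact (hz t ⟨(hsz.trans ht.1).le, htr.le⟩ ht.1).ne' ht.2

lemma upperSemicontinuous_phiE (hu : IsSolFamily p q w u u') (hp : ∀ t, 0 < p t)
    (hcont : ∀ t, Continuous fun z : ℝ × ℝ => u z.1 z.2 t) :
    UpperSemicontinuous fun z : ℝ × ℝ => phiE u z.1 z.2 := by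
  rintro ⟨c, s⟩ y hy
  dsimp only at hy
  obtain ⟨t₀, ht₀⟩ : ∃ t₀ : ℝ, phiE u c s = t₀ :=
    ⟨_, (EReal.coe_toReal hy.ne_top phiE_ne_bot).symm⟩
  obtain ⟨⟨hst₀, hut₀⟩, -⟩ := hu.isLeast_zeroSet (hp s) ht₀
  rw [ht₀] at hy
  obtain ⟨r, hr, hry⟩ := EReal.lt_iff_exists_real_btwn.1 hy
  obtain ⟨t, hut, ht⟩ : ∃ t, u c s t < 0 ∧ t ∈ Ioo t₀ r := by
    have hslope := ((hu.isSturmSolution c s).hasDerivAt t₀).tendsto_slope.mono_left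
      (nhdsGT_le_nhdsNE t₀)
    obtain ⟨t, hneg, ht⟩ := ((hslope.eventually
      (gt_mem_nhds (hu.deriv_neg_of_phiE_eq hp ht₀))).and
      (Ioo_mem_nhdsGT (EReal.coe_lt_coe_iff.1 hr))).exists
    exact ⟨t, hut₀ ▸ (slope_neg_iff_of_le ht.1.le).1 hneg, ht⟩
  filter_upwards [(hcont t).continuousAt.eventually (gt_mem_nhds hut),
    continuous_snd.continuousAt.eventually (gt_mem_nhds (hst₀.trans ht.1))] with z hneg hzt
  have hle : phiE u z.1 z.2 ≤ t := by
    by_contra! hlt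
    exact hneg.not_gt (hu.pos_of_lt_phiE (hp _) hzt hlt)
  exact hle.trans_lt ((EReal.coe_lt_coe_iff.2 ht.2).trans hry)

end IsSolFamily

/-! ### Compositions of zero functions -/

/-- The properties of a zero function `(c, s) ↦ φ_c(s)` that pass to alternating compositions. -/
structure IsRegularZeroFunction (φ : ℝ → ℝ → EReal) : Prop where
  le_apply : ∀ c s : ℝ, (s : EReal) ≤ φ c s
  apply_zero : ∀ s, φ 0 s = ⊤
  monotone : ∀ c, Monotone (φ c)
  apply_lt_apply : ∀ ⦃c c' s⦄, 0 < c → c < c' → φ c s ≠ ⊤ → φ c' s < φ c s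
  continuous : Continuous fun z : ℝ × ℝ => φ z.1 z.2

theorem IsSolFamily.isRegularZeroFunction {p q w : ℝ → ℝ} {u u' : ℝ → ℝ → ℝ → ℝ}
    (hu : IsSolFamily p q w u u') (hp : ∀ t, 0 < p t) (hq_nonneg : ∀ t, 0 ≤ q t)
    (hq : Continuous q) (hw : Continuous w)
    (hcont : Continuous fun z : ℝ × ℝ × ℝ => u z.1 z.2.1 z.2.2) :
    IsRegularZeroFunction (phiE u) where
  le_apply _ _ := le_phiE fun _ hτ => hτ.1.le
  apply_zero := hu.phiE_zero hp hq_nonneg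
  monotone := hu.monotone_phiE hp
  apply_lt_apply _ _ _ := hu.phiE_lt_phiE hp hq_nonneg
  continuous := continuous_iff_lower_upperSemicontinuous.2
    ⟨hu.lowerSemicontinuous_phiE hp hq hw hcont, hu.upperSemicontinuous_phiE hp fun t =>
      hcont.comp (by fun_prop : Continuous fun z : ℝ × ℝ => (z.1, z.2, t))⟩

section PhiStep

variable {u : ℝ → ℝ → ℝ → ℝ}

lemma phiStep_coe (c s : ℝ) : phiStep u c s = phiE u c s := by
  simp [phiStep]

lemma phiStep_top (c : ℝ) : phiStep u c ⊤ = ⊤ := by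
  simp [phiStep]

end PhiStep

namespace IsRegularZeroFunction

lemma apply_le_apply {φ : ℝ → ℝ → EReal} (hφ : IsRegularZeroFunction φ) {c c' : ℝ} (hc : 0 < c)
    (hcc' : c ≤ c') (s : ℝ) : φ c' s ≤ φ c s := by
  rcases hcc'.eq_or_lt with rfl | hlt
  · exact le_rfl
  · by_cases hfin : φ c s = ⊤
    · exact hfin ▸ le_top
    · exact (hφ.apply_lt_apply hc hlt hfin).le

section PhiStep

variable {u : ℝ → ℝ → ℝ → ℝ} {c c' : ℝ} {x x' : EReal}

lemma le_phiStep (hu : IsRegularZeroFunction (phiE u)) (c : ℝ) (x : EReal) :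
    x ≤ phiStep u c x := by
  induction x with
  | bot => exact bot_le
  | top => rw [phiStep_top]
  | coe s => exact phiStep_coe c s ▸ hu.le_apply c s

lemma phiStep_zero (hu : IsRegularZeroFunction (phiE u)) (x : EReal) : phiStep u 0 x = ⊤ := by
  rw [phiStep, hu.apply_zero, ite_self]

lemma phiStep_le_phiStep (hu : IsRegularZeroFunction (phiE u)) (hc : 0 < c) (hcc' : c ≤ c')
    (hx' : x' ≠ ⊥) (hx'x : x' ≤ x) : phiStep u c' x' ≤ phiStep u c x := by
  by_cases hx : x = ⊤
  · rw [hx, phiStep_top]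
    exact le_top
  lift x to ℝ using ⟨hx, ne_bot_of_le_ne_bot hx' hx'x⟩
  lift x' to ℝ using ⟨ne_top_of_le_ne_top hx hx'x, hx'⟩
  rw [phiStep_coe, phiStep_coe]
  exact (hu.monotone c' (EReal.coe_le_coe_iff.1 hx'x)).trans (hu.apply_le_apply hc hcc' x)

lemma phiStep_lt_phiStep (hu : IsRegularZeroFunction (phiE u)) (hc : 0 < c) (hcc' : c < c')
    (hx' : x' ≠ ⊥) (hx'x : x' ≤ x) (hfin : phiStep u c x ≠ ⊤) :
    phiStep u c' x' < phiStep u c x := by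
  have hx : x ≠ ⊤ := by rintro rfl; exact hfin (phiStep_top c)
  lift x to ℝ using ⟨hx, ne_bot_of_le_ne_bot hx' hx'x⟩
  lift x' to ℝ using ⟨ne_top_of_le_ne_top hx hx'x, hx'⟩
  rw [phiStep_coe] at hfin ⊢
  rw [phiStep_coe]
  exact (hu.monotone c' (EReal.coe_le_coe_iff.1 hx'x)).trans_lt (hu.apply_lt_apply hc hcc' hfin)

lemma continuousAt_phiStep (hu : IsRegularZeroFunction (phiE u)) (c : ℝ) (hx : x ≠ ⊥) :
    ContinuousAt (fun z : ℝ × EReal => phiStep u z.1 z.2) (c, x) := by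
  induction x with
  | bot => contradiction
  | top =>
    rw [ContinuousAt, phiStep_top]
    exact tendsto_nhds_top_mono' continuousAt_snd fun z => hu.le_phiStep z.1 z.2
  | coe s =>
    have hemb : Topology.IsOpenEmbedding (Prod.map id Real.toEReal : ℝ × ℝ → ℝ × EReal) :=
      Topology.IsOpenEmbedding.id.prodMap EReal.isOpenEmbedding_coe
    refine (hemb.continuousAt_iff (x := (c, s))).1 ?_
    simpa only [Function.comp_def, Prod.map, id, phiStep_coe] using hu.continuous.continuousAt

end PhiStep

section PhiGt

variable {uM uN : ℝ → ℝ → ℝ → ℝ} {a a' b b' : ℝ} {k : ℕ} {x : EReal}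

lemma le_PhiGt (hM : IsRegularZeroFunction (phiE uM)) (hN : IsRegularZeroFunction (phiE uN))
    (a b : ℝ) (k : ℕ) (x : EReal) : x ≤ PhiGt uM uN a b k x := by
  induction k with
  | zero => exact le_rfl
  | succ k ih =>
    simp only [PhiGt, Function.comp_apply]
    split_ifs
    · exact ih.trans (hM.le_phiStep _ _)
    · exact ih.trans (hN.le_phiStep _ _)

lemma PhiGt_ne_bot (hM : IsRegularZeroFunction (phiE uM)) (hN : IsRegularZeroFunction (phiE uN))
    (a b : ℝ) (k : ℕ) (hx : x ≠ ⊥) : PhiGt uM uN a b k x ≠ ⊥ :=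
  ne_bot_of_le_ne_bot hx (le_PhiGt hM hN a b k x)

lemma PhiGt_zero_zero (hM : IsRegularZeroFunction (phiE uM))
    (hN : IsRegularZeroFunction (phiE uN)) (hk : k ≠ 0) (x : EReal) :
    PhiGt uM uN 0 0 k x = ⊤ := by
  obtain ⟨j, rfl⟩ := Nat.exists_eq_succ_of_ne_zero hk
  simp only [PhiGt, Function.comp_apply]
  split_ifs
  · exact hM.phiStep_zero _
  · exact hN.phiStep_zero _

lemma PhiGt_le_PhiGt (hM : IsRegularZeroFunction (phiE uM))
    (hN : IsRegularZeroFunction (phiE uN)) (ha : 0 < a) (hb : 0 < b) (haa' : a ≤ a')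
    (hbb' : b ≤ b') (hx : x ≠ ⊥) (k : ℕ) :
    PhiGt uM uN a' b' k x ≤ PhiGt uM uN a b k x := by
  induction k with
  | zero => exact le_rfl
  | succ k ih =>
    have hbot := PhiGt_ne_bot hM hN a' b' k hx
    simp only [PhiGt, Function.comp_apply]
    split_ifs
    · exact hM.phiStep_le_phiStep ha haa' hbot ih
    · exact hN.phiStep_le_phiStep hb hbb' hbot ih

lemma PhiGt_lt_PhiGt (hM : IsRegularZeroFunction (phiE uM))
    (hN : IsRegularZeroFunction (phiE uN)) (ha : 0 < a) (hb : 0 < b) (haa' : a < a')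
    (hbb' : b < b') (hx : x ≠ ⊥) (hk : k ≠ 0) (hfin : PhiGt uM uN a b k x ≠ ⊤) :
    PhiGt uM uN a' b' k x < PhiGt uM uN a b k x := by
  obtain ⟨j, rfl⟩ := Nat.exists_eq_succ_of_ne_zero hk
  have hbot := PhiGt_ne_bot hM hN a' b' j hx
  have hle := PhiGt_le_PhiGt hM hN ha hb haa'.le hbb'.le hx j
  simp only [PhiGt, Function.comp_apply] at hfin ⊢
  split_ifs at hfin ⊢
  · exact hM.phiStep_lt_phiStep ha haa' hbot hle hfin
  · exact hN.phiStep_lt_phiStep hb hbb' hbot hle hfin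

lemma continuous_PhiGt (hM : IsRegularZeroFunction (phiE uM))
    (hN : IsRegularZeroFunction (phiE uN)) (hx : x ≠ ⊥) (k : ℕ) :
    Continuous fun ab : ℝ × ℝ => PhiGt uM uN ab.1 ab.2 k x := by
  induction k with
  | zero => exact continuous_const
  | succ k ih =>
    refine continuous_iff_continuousAt.2 fun ab => ?_
    have hbot := PhiGt_ne_bot hM hN ab.1 ab.2 k hx
    simp only [PhiGt, Function.comp_apply]
    split_ifs
    · exact (hM.continuousAt_phiStep ab.1 hbot).comp
        (f := fun ab : ℝ × ℝ => (ab.1, PhiGt uM uN ab.1 ab.2 k x))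
        (continuousAt_fst.prodMk ih.continuousAt)
    · exact (hN.continuousAt_phiStep ab.2 hbot).comp
        (f := fun ab : ℝ × ℝ => (ab.2, PhiGt uM uN ab.1 ab.2 k x))
        (continuousAt_snd.prodMk ih.continuousAt)

lemma le_PhiGt_of_tendsto (hM : IsRegularZeroFunction (phiE uM))
    (hN : IsRegularZeroFunction (phiE uN)) (ha : 0 < a) (hb : 0 < b) (hx : x ≠ ⊥) {L : EReal}
    (hL : Tendsto (fun ab : ℝ × ℝ => PhiGt uM uN ab.1 ab.2 k x) atTop (𝓝 L)) :
    L ≤ PhiGt uM uN a b k x := by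
  refine le_of_tendsto hL ?_
  filter_upwards [eventually_ge_atTop (a, b)] with z hz
  exact PhiGt_le_PhiGt hM hN ha hb hz.1 hz.2 hx k

lemma exists_PhiGt_eq_of_lt (hM : IsRegularZeroFunction (phiE uM))
    (hN : IsRegularZeroFunction (phiE uN)) (ha : 0 < a) (hb : 0 < b) (hx : x ≠ ⊥) (hk : k ≠ 0)
    {y : EReal} (hy : y ≠ ⊤) (hlt : PhiGt uM uN a b k x < y) :
    ∃ a' > 0, ∃ b' > 0, PhiGt uM uN a' b' k x = y := by
  have hray : Continuous fun t : ℝ => PhiGt uM uN (t * a) (t * b) k x :=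
    (continuous_PhiGt hM hN hx k).comp (by fun_prop : Continuous fun t : ℝ => (t * a, t * b))
  have hzero : PhiGt uM uN (0 * a) (0 * b) k x = ⊤ := by
    rw [zero_mul, zero_mul, PhiGt_zero_zero hM hN hk]
  obtain ⟨t, ht, hty⟩ := intermediate_value_Icc' zero_le_one hray.continuousOn
    (show y ∈ Icc _ _ from ⟨by simpa only [one_mul] using hlt.le, hzero ▸ le_top⟩)
  have ht_pos : 0 < t := ht.1.lt_of_ne fun h => hy <| by rw [← hty, ← hzero, h]
  exact ⟨t * a, mul_pos ht_pos ha, t * b, mul_pos ht_pos hb, hty⟩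

end PhiGt

end IsRegularZeroFunction

theorem CGt_nonempty_iff_limit_lt_general {uM uN : ℝ → ℝ → ℝ → ℝ}
    (hM : IsRegularZeroFunction (phiE uM)) (hN : IsRegularZeroFunction (phiE uN))
    {T₁ T₂ : ℝ} {k : ℕ} (hk : k ≠ 0) {L : EReal}
    (hL : Tendsto (fun ab : ℝ × ℝ => PhiGt uM uN ab.1 ab.2 k T₁) atTop (𝓝 L)) :
    (CGt uM uN T₁ T₂ k).Nonempty ↔ L < T₂ := by
  have hT₁ : (T₁ : EReal) ≠ ⊥ := EReal.coe_ne_bot T₁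
  constructor
  · rintro ⟨⟨a, b⟩, ha : 0 < a, hb : 0 < b, hab : PhiGt uM uN a b k T₁ = T₂⟩
    calc L ≤ PhiGt uM uN (a + 1) (b + 1) k T₁ :=
          hM.le_PhiGt_of_tendsto hN (by positivity) (by positivity) hT₁ hL
      _ < PhiGt uM uN a b k T₁ :=
          hM.PhiGt_lt_PhiGt hN ha hb (lt_add_one a) (lt_add_one b) hT₁ hk
            (hab ▸ EReal.coe_ne_top T₂)
      _ = T₂ := hab
  · intro hLT
    obtain ⟨⟨a, b⟩, hlt, ha, hb⟩ :=
      ((hL.eventually (gt_mem_nhds hLT)).and (eventually_ge_atTop ((1, 1) : ℝ × ℝ))).exists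
    obtain ⟨a', ha', b', hb', hab⟩ := hM.exists_PhiGt_eq_of_lt hN (one_pos.trans_le ha)
      (one_pos.trans_le hb) hT₁ hk (EReal.coe_ne_top T₂) hlt
    exact ⟨(a', b'), ha', hb', hab⟩

/-- For `k ≥ 2`, the set
`C_k^{>++} = {(a,b) ∈ ℝ⁺×ℝ⁺ : Φ_k^>(a,b)(T₁) = T₂}` is nonempty if and only if
`lim_{a,b→+∞} Φ_k^>(a,b)(T₁) < T₂`. -/
theorem CGt_nonempty_iff_limit_lt
    (p q m n : ℝ → ℝ) (uM uM' uN uN' : ℝ → ℝ → ℝ → ℝ) (T₁ T₂ : ℝ) (k : ℕ)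
    (hk : 2 ≤ k) (hT : T₁ < T₂)
    (hp : Continuous p) (hq : Continuous q) (hm : Continuous m) (hn : Continuous n)
    (hppos : ∀ t, 0 < p t) (hqnn : ∀ t, 0 ≤ q t)
    (hM : IsSolFamily p q m uM uM') (hN : IsSolFamily p q n uN uN')
    (hcM : Continuous fun x : ℝ × ℝ × ℝ => uM x.1 x.2.1 x.2.2)
    (hcN : Continuous fun x : ℝ × ℝ × ℝ => uN x.1 x.2.1 x.2.2) :
    ∀ L : EReal,
      Tendsto (fun ab : ℝ × ℝ => PhiGt uM uN ab.1 ab.2 k (T₁ : EReal))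
        atTop (nhds L) →
      ((CGt uM uN T₁ T₂ k).Nonempty ↔ L < (T₂ : EReal)) := fun _ hL =>
  CGt_nonempty_iff_limit_lt_general (hM.isRegularZeroFunction hppos hqnn hq hm hcM)
    (hN.isRegularZeroFunction hppos hqnn hq hn hcN) (by omega) hL
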